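/- arXiv:1408.0979 — 2 statements merged into one kernel-verified Lean document; each statement's English description precedes it below -/
import Mathlib

section
/- In a DMC, if s' is a successor of the global state s, then there exists exactly one maximal step u at s such that s' is the u-successor of s. -/
/-- A probabilistic asynchronous system over agents `{1,…,n}` with local state
spaces `S i`, actions `A`, locations `loc`, enabling sets `en` and probabilistic
transition functions `prob`. -/
structure PAS (n : ℕ) (A : Type) (S : Fin n → Type) [Fintype A] [∀ i, Fintype (S i)] where
  loc : A → Finset (Fin n)
  loc_nonempty : ∀ a, (loc a).Nonempty
  en : ∀ a : A, Set (∀ i : {j // j ∈ loc a}, S i.1)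
  prob : ∀ a : A, (∀ i : {j // j ∈ loc a}, S i.1) → (∀ i : {j // j ∈ loc a}, S i.1) → ℝ
  prob_nonneg : ∀ a v v', v ∈ en a → 0 ≤ prob a v v'
  prob_sum : ∀ a v, v ∈ en a →
    ∑ v' : (∀ i : {j // j ∈ loc a}, S i.1), prob a v v' = 1

namespace PAS

variable {n : ℕ} {A : Type} {S : Fin n → Type} [Fintype A] [∀ i, Fintype (S i)]

/-- Projection of a global state to an `a`-state. -/
def projA (P : PAS n A S) (a : A) (s : ∀ i, S i) : ∀ i : {j // j ∈ P.loc a}, S i.1 :=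
  fun i => s i.1

/-- Action `a` is enabled at global state `s`. -/
def enabledA (P : PAS n A S) (a : A) (s : ∀ i, S i) : Prop := P.projA a s ∈ P.en a

/-- An event `(v, a, v')` with `v ∈ en a` and `π^a(v)(v') > 0`. -/
structure Event (P : PAS n A S) where
  act : A
  src : ∀ i : {j // j ∈ P.loc act}, S i.1
  tgt : ∀ i : {j // j ∈ P.loc act}, S i.1
  src_en : src ∈ P.en act
  prob_pos : 0 < P.prob act src tgt

/-- The probability attached to an event. -/
def Event.p {P : PAS n A S} (e : P.Event) : ℝ := P.prob e.act e.src e.tgt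

/-- Event `e` is enabled at global state `s`. -/
def Event.enabled {P : PAS n A S} (e : P.Event) (s : ∀ i, S i) : Prop :=
  P.projA e.act s = e.src

/-- The transition relation `s →_e s'`. -/
def Event.trans {P : PAS n A S} (e : P.Event) (s s' : ∀ i, S i) : Prop :=
  e.enabled s ∧ (∀ i : {j // j ∈ P.loc e.act}, s' i.1 = e.tgt i) ∧
    ∀ j, j ∉ P.loc e.act → s' j = s j

/-- Events are independent iff their locations are disjoint. -/
def indep {P : PAS n A S} (e e' : P.Event) : Prop :=
  P.loc e.act ∩ P.loc e'.act = ∅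

/-- `u` is a step at `s`: a nonempty finite set of events, each enabled at `s`,
pairwise independent. -/
def isStep (P : PAS n A S) (u : Set P.Event) (s : ∀ i, S i) : Prop :=
  u.Finite ∧ u.Nonempty ∧ (∀ e ∈ u, Event.enabled e s) ∧
    ∀ e ∈ u, ∀ e' ∈ u, e ≠ e' → indep e e'

/-- `u` is a maximal step at `s`. -/
def isMaxStep (P : PAS n A S) (u : Set P.Event) (s : ∀ i, S i) : Prop :=
  P.isStep u s ∧ ∀ e ∉ u, ¬ P.isStep (insert e u) s

/-- `loc(u) = ⋃_{e ∈ u} loc(e)`. -/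
def locU (P : PAS n A S) (u : Set P.Event) : Set (Fin n) :=
  ⋃ e ∈ u, (P.loc e.act : Set (Fin n))

/-- `s'` is a `u`-successor of `s`. -/
def uSucc (P : PAS n A S) (u : Set P.Event) (s s' : ∀ i, S i) : Prop :=
  (∀ e ∈ u, ∀ i : {j // j ∈ P.loc (Event.act e)}, s' i.1 = e.tgt i) ∧
    ∀ j, j ∉ P.locU u → s' j = s j

/-- `s'` is a successor of `s`. -/
def isSuccessor (P : PAS n A S) (s s' : ∀ i, S i) : Prop :=
  ∃ u, P.isMaxStep u s ∧ P.uSucc u s s'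

/-- `s` is a deadlock iff no event is enabled at `s`. -/
def isDeadlock (P : PAS n A S) (s : ∀ i, S i) : Prop :=
  ¬ ∃ e : P.Event, e.enabled s

/-- `act(x)` for a local state `x ∈ S i`. -/
def actSet (P : PAS n A S) (i : Fin n) (x : S i) : Set A :=
  {a | ∃ h : i ∈ P.loc a, ∃ v ∈ P.en a, v ⟨i, h⟩ = x}

/-- A DMC: for every agent `i` and local state `x`, `|act(x)| = 1`. -/
def isDMC (P : PAS n A S) : Prop :=
  ∀ (i : Fin n) (x : S i), ∃! a : A, a ∈ P.actSet i x

/-! When the actions enabled at `s` have pairwise disjoint locations, a maximal step leading from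
`s` to `s'` must contain every event of the form `(s_a, a, s'_a)`, hence is determined by `s` and
`s'`: by maximality, such an event outside the step would share an agent with an event of the step,
so the two would have the same action and, being read off the same states, coincide. -/

section Events

variable {P : PAS n A S} {s s' : ∀ i, S i} {e f : P.Event}

theorem Event.enabled.enabledA (he : e.enabled s) : P.enabledA e.act s :=
  Set.mem_of_eq_of_mem he e.src_en

theorem indep_iff_disjoint : indep e f ↔ Disjoint (P.loc e.act) (P.loc f.act) :=
  Finset.disjoint_iff_inter_eq_empty.symm

theorem indep.symm (h : indep e f) : indep f e :=
  indep_iff_disjoint.mpr (indep_iff_disjoint.mp h).symm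

/-- The events of the form `(s_a, a, s'_a)`, that is, those compatible with a move of the system
from `s` to `s'`. Nothing is required of `s` and `s'` at the agents outside the event. -/
def eventsBetween (P : PAS n A S) (s s' : ∀ i, S i) : Set P.Event :=
  {e | e.enabled s ∧ P.projA e.act s' = e.tgt}

theorem injOn_act_eventsBetween (P : PAS n A S) (s s' : ∀ i, S i) :
    Set.InjOn Event.act (P.eventsBetween s s') := by
  rintro ⟨a, v, v', _, _⟩ ⟨hv, hv'⟩ ⟨b, w, w', _, _⟩ ⟨hw, hw'⟩ (rfl : a = b)
  obtain rfl : v = w := hv.symm.trans hw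
  obtain rfl : v' = w' := hv'.symm.trans hw'
  rfl

end Events

section Steps

variable {P : PAS n A S} {s s' : ∀ i, S i} {u : Set P.Event} {e : P.Event}

theorem isStep.insert (hu : P.isStep u s) (he : e.enabled s) (hind : ∀ f ∈ u, indep e f) :
    P.isStep (insert e u) s := by
  obtain ⟨hfin, -, hen, hpair⟩ := hu
  refine ⟨hfin.insert e, Set.insert_nonempty e u, Set.forall_mem_insert.mpr ⟨he, hen⟩, ?_⟩
  exact fun f hf g hg =>
    Set.Pairwise.insert hpair (fun f' hf' _ => ⟨hind f' hf', (hind f' hf').symm⟩) hf hg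

theorem isMaxStep.exists_not_indep (hu : P.isMaxStep u s) (he : e.enabled s) (heu : e ∉ u) :
    ∃ f ∈ u, ¬ indep e f := by
  by_contra! hind
  exact hu.2 e heu (hu.1.insert he hind)

theorem isStep.subset_eventsBetween (hu : P.isStep u s) (hus : P.uSucc u s s') :
    u ⊆ P.eventsBetween s s' :=
  fun e he => ⟨hu.2.2.1 e he, funext (hus.1 e he)⟩

theorem isMaxStep.eq_eventsBetween (hs : {a | P.enabledA a s}.PairwiseDisjoint P.loc)
    (hu : P.isMaxStep u s) (hus : P.uSucc u s s') : u = P.eventsBetween s s' := by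
  have hsub : u ⊆ P.eventsBetween s s' := hu.1.subset_eventsBetween hus
  refine hsub.antisymm fun e he => ?_
  by_contra heu
  obtain ⟨f, hfu, hef⟩ := hu.exists_not_indep he.1 heu
  have hact : e.act = f.act :=
    hs.elim he.1.enabledA (hsub hfu).1.enabledA (mt indep_iff_disjoint.mpr hef)
  have hfe : e = f := P.injOn_act_eventsBetween s s' he (hsub hfu) hact
  exact heu (hfe ▸ hfu)

end Steps

theorem enabledA.mem_actSet {P : PAS n A S} {a : A} {s : ∀ i, S i} (ha : P.enabledA a s)
    {i : Fin n} (hi : i ∈ P.loc a) : a ∈ P.actSet i (s i) :=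
  ⟨hi, P.projA a s, ha, rfl⟩

theorem isDMC.pairwiseDisjoint_loc {P : PAS n A S} (hP : P.isDMC) (s : ∀ i, S i) :
    {a | P.enabledA a s}.PairwiseDisjoint P.loc := by
  intro a ha b hb hab
  refine Finset.disjoint_left.mpr fun i hia hib => hab ?_
  exact (hP i (s i)).unique (enabledA.mem_actSet ha hia) (enabledA.mem_actSet hb hib)

theorem stmt5_general (P : PAS n A S) (s s' : ∀ i, S i)
    (hs : {a | P.enabledA a s}.PairwiseDisjoint P.loc) (h : P.isSuccessor s s') :
    ∃! u : Set P.Event, P.isMaxStep u s ∧ P.uSucc u s s' := by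
  obtain ⟨u, hu, hus⟩ := h
  refine ⟨u, ⟨hu, hus⟩, fun w ⟨hw, hws⟩ => ?_⟩
  exact (hw.eq_eventsBetween hs hws).trans (hu.eq_eventsBetween hs hus).symm

theorem stmt5 (P : PAS n A S) (hP : P.isDMC) (s s' : ∀ i, S i)
    (h : P.isSuccessor s s') :
    ∃! u : Set P.Event, P.isMaxStep u s ∧ P.uSucc u s s' :=
  P.stmt5_general s s' (hP.pairwiseDisjoint_loc s) h

end PAS
end

section
/- Let s be a non-deadlock global state of a DMC and let E(s) be the set of actions enabled at s. Then the map sending each choice function c, which assigns to every a ∈ E(s) an a-state c(a) with π^a(s_a)(c(a)) > 0, to the u-successor of s for the maximal step u = { (s_a, a, c(a)) | a ∈ E(s) }, is a bijection onto the set of successors of s. Consequently, the number of successors of s equals ∏_{a ∈ E(s)} |{ v' | π^a(s_a)(v') > 0 }|, while the number of events enabled at s equals ∑_{a ∈ E(s)} |{ v' | π^a(s_a)(v') > 0 }|. -/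
namespace PAS

variable {n : ℕ} {A : Type} {S : Fin n → Type} [Fintype A] [∀ i, Fintype (S i)]

/-- The event `(s_a, a, v')` determined by an enabled action `a` and a target
`a`-state `v'` of positive probability. -/
def mkEv (P : PAS n A S) (s : ∀ i, S i) (a : A) (h : P.enabledA a s)
    (v' : ∀ i : {j // j ∈ P.loc a}, S i.1) (hv : 0 < P.prob a (P.projA a s) v') :
    P.Event :=
  ⟨a, P.projA a s, v', h, hv⟩

section

variable {P : PAS n A S} {s : ∀ i, S i}

/-- The type of `a`-states. -/
abbrev AState (P : PAS n A S) (a : A) : Type :=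
  ∀ i : {j // j ∈ P.loc a}, S i.1

/-- The possible outcomes of performing `a` at `s`: the support of `π^a(s_a)`. -/
abbrev targets (P : PAS n A S) (s : ∀ i, S i) (a : A) : Set (P.AState a) :=
  {v' | 0 < P.prob a (P.projA a s) v'}

/-- The global state `s` is conflict-free: no agent takes part in two distinct actions enabled
at `s`. -/
def ConflictFree (P : PAS n A S) (s : ∀ i, S i) : Prop :=
  {a | P.enabledA a s}.PairwiseDisjoint P.loc

/-- The choice functions at `s`, assigning a possible outcome to every enabled action. -/
abbrev Choice (P : PAS n A S) (s : ∀ i, S i) : Type :=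
  {c : ∀ a : A, P.enabledA a s → P.AState a // ∀ a h, 0 < P.prob a (P.projA a s) (c a h)}

/-- The set of events `{(s_a, a, c(a)) | a enabled at s}` selected by a choice function `c`. -/
abbrev Choice.step (c : P.Choice s) : Set P.Event :=
  Set.range fun a : {a : A // P.enabledA a s} =>
    P.mkEv s a.1 a.2 (c.1 a.1 a.2) (c.2 a.1 a.2)

theorem isDMC.conflictFree (hP : P.isDMC) (s : ∀ i, S i) : P.ConflictFree s := by
  intro a ha b hb hab
  refine Finset.disjoint_left.2 fun i hia hib => hab ?_
  exact (hP i (s i)).unique ⟨hia, _, ha, rfl⟩ ⟨hib, _, hb, rfl⟩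

theorem exists_prob_pos (P : PAS n A S) {a : A} {v : P.AState a} (hv : v ∈ P.en a) :
    ∃ v', 0 < P.prob a v v' := by
  have hsum : ∑ _v' : P.AState a, (0 : ℝ) < ∑ v', P.prob a v v' := by
    rw [Finset.sum_const_zero, P.prob_sum a v hv]
    exact one_pos
  obtain ⟨v', -, hv'⟩ := Finset.exists_lt_of_sum_lt hsum
  exact ⟨v', hv'⟩

namespace Event

variable {e : P.Event}

theorem enabled.enabledA_act (he : e.enabled s) : P.enabledA e.act s :=
  Set.mem_of_eq_of_mem he e.src_en

theorem enabled.tgt_mem_targets (he : e.enabled s) : e.tgt ∈ P.targets s e.act := by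
  rw [targets, Set.mem_ofPred_eq, he]
  exact e.prob_pos

theorem enabled.mkEv_eq (he : e.enabled s) :
    P.mkEv s e.act he.enabledA_act e.tgt he.tgt_mem_targets = e := by
  obtain ⟨a, v, v', hv, hpos⟩ := e
  obtain rfl : P.projA a s = v := he
  rfl

end Event

theorem indep.act_ne {e e' : P.Event} (h : indep e e') : e.act ≠ e'.act := by
  intro hact
  rw [indep, hact, Finset.inter_self] at h
  exact (P.loc_nonempty e'.act).ne_empty h

theorem ConflictFree.indep_iff_act_ne (hs : P.ConflictFree s) {e e' : P.Event}
    (he : e.enabled s) (he' : e'.enabled s) : indep e e' ↔ e.act ≠ e'.act :=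
  ⟨indep.act_ne, fun hne =>
    Finset.disjoint_iff_inter_eq_empty.1 (hs he.enabledA_act he'.enabledA_act hne)⟩

theorem ConflictFree.isStep_iff_injOn_act (hs : P.ConflictFree s) {u : Set P.Event} :
    P.isStep u s ↔ u.Nonempty ∧ (∀ e ∈ u, e.enabled s) ∧ u.InjOn Event.act := by
  constructor
  · rintro ⟨-, hne, hen, hind⟩
    refine ⟨hne, hen, fun e he e' he' hact => ?_⟩
    by_contra hee'
    exact (hind e he e' he' hee').act_ne hact
  · rintro ⟨hne, hen, hinj⟩
    refine ⟨.of_finite_image (Set.toFinite _) hinj, hne, hen, fun e he e' he' hee' => ?_⟩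
    exact (hs.indep_iff_act_ne (hen e he) (hen e' he')).2 (hinj.ne he he' hee')

theorem ConflictFree.isMaxStep_iff_bijOn_act (hs : P.ConflictFree s) (hnd : ¬ P.isDeadlock s)
    {u : Set P.Event} :
    P.isMaxStep u s ↔
      (∀ e ∈ u, e.enabled s) ∧ Set.BijOn Event.act u {a | P.enabledA a s} := by
  simp only [isMaxStep, hs.isStep_iff_injOn_act]
  constructor
  · rintro ⟨⟨-, hen, hinj⟩, hmax⟩
    refine ⟨hen, fun e he => (hen e he).enabledA_act, hinj, fun a ha => ?_⟩
    by_contra hau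
    obtain ⟨v', hv'⟩ := P.exists_prob_pos ha
    have hnotMem : P.mkEv s a ha v' hv' ∉ u := fun h => hau ⟨_, h, rfl⟩
    exact hmax _ hnotMem ⟨Set.insert_nonempty _ _, Set.forall_mem_insert.2 ⟨rfl, hen⟩,
      (Set.injOn_insert hnotMem).2 ⟨hinj, hau⟩⟩
  · rintro ⟨hen, hbij⟩
    have hne : u.Nonempty := by
      obtain ⟨e, he⟩ := not_not.1 hnd
      obtain ⟨e', he', -⟩ := hbij.surjOn he.enabledA_act
      exact ⟨e', he'⟩
    refine ⟨⟨hne, hen, hbij.injOn⟩, fun e heu ⟨_, hen', hinj'⟩ => ?_⟩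
    have he : e.enabled s := hen' e (Set.mem_insert _ _)
    exact ((Set.injOn_insert heu).1 hinj').2 (hbij.surjOn he.enabledA_act)

theorem exists_choice_step_eq_iff {u : Set P.Event} :
    (∃ c : P.Choice s, c.step = u) ↔
      (∀ e ∈ u, e.enabled s) ∧ Set.BijOn Event.act u {a | P.enabledA a s} := by
  constructor
  · rintro ⟨c, rfl⟩
    refine ⟨?_, ?_, ?_, fun a ha => ⟨_, ⟨⟨a, ha⟩, rfl⟩, rfl⟩⟩
    · rintro _ ⟨a, rfl⟩
      rfl
    · rintro _ ⟨a, rfl⟩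
      exact a.2
    · rintro _ ⟨a, rfl⟩ _ ⟨b, rfl⟩ hab
      obtain rfl : a = b := Subtype.ext hab
      rfl
  · rintro ⟨hen, hbij⟩
    have hmem : ∀ a (h : P.enabledA a s), ∃ v' hv', P.mkEv s a h v' hv' ∈ u := by
      intro a h
      obtain ⟨e, he, rfl⟩ := hbij.surjOn h
      exact ⟨e.tgt, (hen e he).tgt_mem_targets, (hen e he).mkEv_eq.symm ▸ he⟩
    choose c hc hcu using hmem
    refine ⟨⟨c, hc⟩, Set.Subset.antisymm ?_ fun e he => ?_⟩
    · rintro _ ⟨a, rfl⟩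
      exact hcu a.1 a.2
    · have ha := (hen e he).enabledA_act
      exact ⟨⟨e.act, ha⟩, hbij.injOn (hcu e.act ha) he rfl⟩

theorem ConflictFree.isMaxStep_iff_exists_choice (hs : P.ConflictFree s)
    (hnd : ¬ P.isDeadlock s) {u : Set P.Event} :
    P.isMaxStep u s ↔ ∃ c : P.Choice s, c.step = u :=
  (hs.isMaxStep_iff_bijOn_act hnd).trans exists_choice_step_eq_iff.symm

theorem uSucc.unique {u : Set P.Event} {s₁ s₂ : ∀ i, S i}
    (h₁ : P.uSucc u s s₁) (h₂ : P.uSucc u s s₂) : s₁ = s₂ := by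
  funext j
  by_cases hj : j ∈ P.locU u
  · obtain ⟨e, he, hje⟩ := Set.mem_iUnion₂.1 hj
    exact (h₁.1 e he ⟨j, hje⟩).trans (h₂.1 e he ⟨j, hje⟩).symm
  · rw [h₁.2 j hj, h₂.2 j hj]

theorem Choice.projA_eq_of_uSucc_step {c : P.Choice s} {s' : ∀ i, S i}
    (hc : P.uSucc c.step s s') (a : A) (h : P.enabledA a s) : P.projA a s' = c.1 a h :=
  funext (hc.1 _ ⟨⟨a, h⟩, rfl⟩)

theorem Choice.eq_of_uSucc_step {c d : P.Choice s} {s' : ∀ i, S i}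
    (hc : P.uSucc c.step s s') (hd : P.uSucc d.step s s') : c = d := by
  refine Subtype.ext (funext₂ fun a h => ?_)
  rw [← projA_eq_of_uSucc_step hc, ← projA_eq_of_uSucc_step hd]

theorem ConflictFree.bijOn_successors (hs : P.ConflictFree s) (hnd : ¬ P.isDeadlock s)
    {Φ : P.Choice s → ∀ i, S i} (hΦ : ∀ c, P.uSucc c.step s (Φ c)) :
    Set.BijOn Φ Set.univ {s' | P.isSuccessor s s'} := by
  refine ⟨fun c _ => ?_, fun c _ d _ hcd => ?_, ?_⟩
  · exact ⟨c.step, (hs.isMaxStep_iff_exists_choice hnd).2 ⟨c, rfl⟩, hΦ c⟩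
  · exact Choice.eq_of_uSucc_step (hΦ c) (hcd ▸ hΦ d)
  · rintro s' ⟨u, hu, hs'⟩
    obtain ⟨c, rfl⟩ := (hs.isMaxStep_iff_exists_choice hnd).1 hu
    exact ⟨c, Set.mem_univ c, (hΦ c).unique hs'⟩

/-- Choice functions at `s` as elements of the product of the sets of possible outcomes. -/
def choiceEquivPi (P : PAS n A S) (s : ∀ i, S i) :
    P.Choice s ≃ ∀ a : {a | P.enabledA a s}, P.targets s a where
  toFun c a := ⟨c.1 a.1 a.2, c.2 a.1 a.2⟩
  invFun f := ⟨fun a h => (f ⟨a, h⟩).1, fun a h => (f ⟨a, h⟩).2⟩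
  left_inv _ := rfl
  right_inv _ := rfl

/-- Events enabled at `s` as elements of the disjoint union of the sets of possible outcomes. -/
def enabledEquivSigma (P : PAS n A S) (s : ∀ i, S i) :
    {e : P.Event | e.enabled s} ≃ Σ a : {a | P.enabledA a s}, P.targets s a where
  toFun e := ⟨⟨e.1.act, e.2.enabledA_act⟩, e.1.tgt, e.2.tgt_mem_targets⟩
  invFun x := ⟨P.mkEv s x.1.1 x.1.2 x.2.1 x.2.2, rfl⟩
  left_inv e := Subtype.ext e.2.mkEv_eq
  right_inv _ := rfl

theorem card_choice (P : PAS n A S) (s : ∀ i, S i) :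
    Nat.card (P.Choice s) = ∏ᶠ a ∈ {a | P.enabledA a s}, (P.targets s a).ncard := by
  have := Fintype.ofFinite {a | P.enabledA a s}
  rw [Nat.card_congr (P.choiceEquivPi s), Nat.card_pi, ← finprod_set_coe_eq_finprod_mem,
    finprod_eq_prod_of_fintype]
  rfl

theorem ncard_setOf_enabled (P : PAS n A S) (s : ∀ i, S i) :
    {e : P.Event | e.enabled s}.ncard =
      ∑ᶠ a ∈ {a | P.enabledA a s}, (P.targets s a).ncard := by
  have := Fintype.ofFinite {a | P.enabledA a s}
  rw [← Nat.card_coe_set_eq, Nat.card_congr (P.enabledEquivSigma s), Nat.card_sigma,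
    ← finsum_set_coe_eq_finsum_mem, finsum_eq_sum_of_fintype]
  rfl

theorem stmt9_general (hs : P.ConflictFree s) (hnd : ¬ P.isDeadlock s)
    {Φ : P.Choice s → ∀ i, S i} (hΦ : ∀ c, P.uSucc c.step s (Φ c)) :
    (∀ c : P.Choice s, P.isMaxStep c.step s) ∧
    Set.BijOn Φ Set.univ {s' | P.isSuccessor s s'} ∧
    {s' | P.isSuccessor s s'}.ncard =
      ∏ᶠ a ∈ {a | P.enabledA a s}, (P.targets s a).ncard ∧
    {e : P.Event | e.enabled s}.ncard =
      ∑ᶠ a ∈ {a | P.enabledA a s}, (P.targets s a).ncard := by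
  have hbij := hs.bijOn_successors hnd hΦ
  refine ⟨fun c => (hs.isMaxStep_iff_exists_choice hnd).2 ⟨c, rfl⟩, hbij, ?_,
    P.ncard_setOf_enabled s⟩
  calc {s' | P.isSuccessor s s'}.ncard
      = Nat.card (P.Choice s) := by
        rw [← hbij.image_eq, hbij.injOn.ncard_image, Set.ncard_univ]
    _ = ∏ᶠ a ∈ {a | P.enabledA a s}, (P.targets s a).ncard := P.card_choice s

end

theorem stmt9 (P : PAS n A S) (hP : P.isDMC) (s : ∀ i, S i)
    (hnd : ¬ P.isDeadlock s)
    (Φ : {c : ∀ (a : A), P.enabledA a s → (∀ i : {j // j ∈ P.loc a}, S i.1) //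
          ∀ a h, 0 < P.prob a (P.projA a s) (c a h)} → (∀ i, S i))
    (hΦ : ∀ c : {c : ∀ (a : A), P.enabledA a s → (∀ i : {j // j ∈ P.loc a}, S i.1) //
          ∀ a h, 0 < P.prob a (P.projA a s) (c a h)}, P.uSucc
        (Set.range (fun a : {a : A // P.enabledA a s} =>
          P.mkEv s a.1 a.2 (c.1 a.1 a.2) (c.2 a.1 a.2))) s (Φ c)) :
    (∀ c : {c : ∀ (a : A), P.enabledA a s → (∀ i : {j // j ∈ P.loc a}, S i.1) //
          ∀ a h, 0 < P.prob a (P.projA a s) (c a h)}, P.isMaxStep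
        (Set.range (fun a : {a : A // P.enabledA a s} =>
          P.mkEv s a.1 a.2 (c.1 a.1 a.2) (c.2 a.1 a.2))) s) ∧
    Set.BijOn Φ Set.univ {s' | P.isSuccessor s s'} ∧
    {s' : ∀ i, S i | P.isSuccessor s s'}.ncard =
      ∏ᶠ a ∈ {a : A | P.enabledA a s},
        {v' : ∀ i : {j // j ∈ P.loc a}, S i.1 | 0 < P.prob a (P.projA a s) v'}.ncard ∧
    {e : P.Event | e.enabled s}.ncard =
      ∑ᶠ a ∈ {a : A | P.enabledA a s},
        {v' : ∀ i : {j // j ∈ P.loc a}, S i.1 | 0 < P.prob a (P.projA a s) v'}.ncard :=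
  stmt9_general (hP.conflictFree s) hnd hΦ

end PAS
end
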